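/- arXiv:2301.01400 — 2 statements merged into one kernel-verified Lean document; each statement's English description precedes it below -/
import Mathlib

section
/- Let γ > 0, L > 0, S > 0, ρ > 0 and let D, m ≥ 1 be integers. Let ℓ_1, …, ℓ_m : ℝ^D → ℝ be twice continuously differentiable functions such that each gradient ∇ℓ_k is S-Lipschitz and each Hessian ∇²ℓ_k is ρ-Lipschitz (with respect to the operator norm on matrices). Let g : ℝ^D → ℝ be differentiable with ‖∇g(x)‖ ≤ L for every x and with ∇g S-Lipschitz. Define the inner-loop map φ(x) = x − (γ/m) Σ_{k=1}^{m} ∇ℓ_k(x) and the validation loss F(x) = g(φ(x)). Then ∇F is S̃-Lipschitz with S̃ = S(1 + γS)² + γρL, i.e. ‖∇F(x̄) − ∇F(x̃)‖ ≤ (S(1 + γS)² + γρL)‖x̄ − x̃‖ for all x̄, x̃ ∈ ℝ^D. -/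
section MAMLSmoothness

variable {E F G : Type*} [NormedAddCommGroup E] [NormedSpace ℝ E]
  [NormedAddCommGroup F] [NormedSpace ℝ F] [NormedAddCommGroup G] [NormedSpace ℝ G]

/-- If `g` has a bounded Lipschitz derivative and `φ` is Lipschitz with a Lipschitz derivative,
then the derivative of `g ∘ φ` is Lipschitz. -/
theorem norm_fderiv_comp_sub_le {g : F → G} {φ : E → F} {L S K R : ℝ}
    (hg : Differentiable ℝ g) (hφ : Differentiable ℝ φ) (hS : 0 ≤ S) (hK : 0 ≤ K)
    (hgbdd : ∀ x, ‖fderiv ℝ g x‖ ≤ L)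
    (hglip : ∀ x y, ‖fderiv ℝ g x - fderiv ℝ g y‖ ≤ S * ‖x - y‖)
    (hφlip : ∀ x y, ‖φ x - φ y‖ ≤ K * ‖x - y‖)
    (hφ'lip : ∀ x y, ‖fderiv ℝ φ x - fderiv ℝ φ y‖ ≤ R * ‖x - y‖) (x y : E) :
    ‖fderiv ℝ (fun z => g (φ z)) x - fderiv ℝ (fun z => g (φ z)) y‖
      ≤ (S * K ^ 2 + R * L) * ‖x - y‖ := by
  have hchain (z : E) :
      fderiv ℝ (fun z => g (φ z)) z = (fderiv ℝ g (φ z)).comp (fderiv ℝ φ z) :=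
    fderiv_fun_comp z (hg _) (hφ z)
  have hL : 0 ≤ L := (norm_nonneg _).trans (hgbdd (φ x))
  have hφ'bdd : ‖fderiv ℝ φ x‖ ≤ K :=
    (hφ x).hasFDerivAt.le_of_lip' hK (.of_forall fun z => hφlip z x)
  have hsplit : (fderiv ℝ g (φ x)).comp (fderiv ℝ φ x) - (fderiv ℝ g (φ y)).comp (fderiv ℝ φ y)
      = (fderiv ℝ g (φ x) - fderiv ℝ g (φ y)).comp (fderiv ℝ φ x)
        + (fderiv ℝ g (φ y)).comp (fderiv ℝ φ x - fderiv ℝ φ y) := by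
    ext v
    simp
  rw [hchain, hchain, hsplit]
  calc _ ≤ ‖fderiv ℝ g (φ x) - fderiv ℝ g (φ y)‖ * ‖fderiv ℝ φ x‖
        + ‖fderiv ℝ g (φ y)‖ * ‖fderiv ℝ φ x - fderiv ℝ φ y‖ :=
        norm_add_le_of_le (ContinuousLinearMap.opNorm_comp_le _ _)
          (ContinuousLinearMap.opNorm_comp_le _ _)
    _ ≤ (S * (K * ‖x - y‖)) * K + L * (R * ‖x - y‖) := by
        gcongr
        · exact (hglip _ _).trans (by gcongr; exact hφlip x y)
        · exact hgbdd _
        · exact hφ'lip x y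
    _ = (S * K ^ 2 + R * L) * ‖x - y‖ := by ring

theorem norm_smul_sum_le_of_forall_norm_le {m : ℕ} (hm : 1 ≤ m) {γ C : ℝ} (hγ : 0 ≤ γ)
    {v : Fin m → E} (hv : ∀ k, ‖v k‖ ≤ C) : ‖(γ / m) • ∑ k, v k‖ ≤ γ * C := by
  have hm' : (m : ℝ) ≠ 0 := by positivity
  have hsum : ‖∑ k, v k‖ ≤ m * C := by
    simpa using norm_sum_le_of_le Finset.univ fun k _ => hv k
  calc ‖(γ / m) • ∑ k, v k‖ = γ / m * ‖∑ k, v k‖ := by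
        rw [norm_smul, Real.norm_of_nonneg (by positivity)]
    _ ≤ γ / m * (m * C) := by gcongr
    _ = γ * C := by field_simp

theorem norm_gradient_sub_gradient {H : Type*} [NormedAddCommGroup H] [InnerProductSpace ℝ H]
    [CompleteSpace H] (f : H → ℝ) (x y : H) :
    ‖gradient f x - gradient f y‖ = ‖fderiv ℝ f x - fderiv ℝ f y‖ := by
  simp only [gradient, ← map_sub, LinearIsometryEquiv.norm_map]

theorem ContDiff.differentiable_gradient {H : Type*} [NormedAddCommGroup H]
    [InnerProductSpace ℝ H] [CompleteSpace H] {f : H → ℝ} (hf : ContDiff ℝ 2 f) :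
    Differentiable ℝ (gradient f) :=
  (InnerProductSpace.toDual ℝ H).symm.differentiable.comp
    ((hf.fderiv_right (m := 1) (by norm_num)).differentiable (by norm_num))

end MAMLSmoothness

/-- Smoothness of the MAML validation loss: the gradient of `F = g ∘ φ`, where
`φ` is one inner-loop gradient step, is `S(1+γS)² + γρL`-Lipschitz. -/
theorem maml_validation_loss_smooth
    {D m : ℕ} (hD : 1 ≤ D) (hm : 1 ≤ m)
    {γ L S ρ : ℝ} (hγ : 0 < γ) (hL : 0 < L) (hS : 0 < S) (hρ : 0 < ρ)
    (ℓ : Fin m → EuclideanSpace ℝ (Fin D) → ℝ)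
    (hC2 : ∀ k, ContDiff ℝ 2 (ℓ k))
    (hgradLip : ∀ (k : Fin m) (x y : EuclideanSpace ℝ (Fin D)),
      ‖gradient (ℓ k) x - gradient (ℓ k) y‖ ≤ S * ‖x - y‖)
    (hHessLip : ∀ (k : Fin m) (x y : EuclideanSpace ℝ (Fin D)),
      ‖fderiv ℝ (fun z => gradient (ℓ k) z) x - fderiv ℝ (fun z => gradient (ℓ k) z) y‖
        ≤ ρ * ‖x - y‖)
    (g : EuclideanSpace ℝ (Fin D) → ℝ)
    (hg : Differentiable ℝ g)
    (hgbdd : ∀ x, ‖gradient g x‖ ≤ L)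
    (hglip : ∀ x y : EuclideanSpace ℝ (Fin D),
      ‖gradient g x - gradient g y‖ ≤ S * ‖x - y‖) :
    ∀ x y : EuclideanSpace ℝ (Fin D),
      ‖gradient (fun z => g (z - (γ / m) • ∑ k, gradient (ℓ k) z)) x
          - gradient (fun z => g (z - (γ / m) • ∑ k, gradient (ℓ k) z)) y‖
        ≤ (S * (1 + γ * S) ^ 2 + γ * ρ * L) * ‖x - y‖ := by
  have hℓ (k : Fin m) : Differentiable ℝ (gradient (ℓ k)) := (hC2 k).differentiable_gradient
  have hstep : Differentiable ℝ fun z => (γ / m) • ∑ k, gradient (ℓ k) z :=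
    (Differentiable.fun_sum fun k _ => hℓ k).fun_const_smul _
  have hφ' (z : EuclideanSpace ℝ (Fin D)) :
      fderiv ℝ (fun z => z - (γ / m) • ∑ k, gradient (ℓ k) z) z
        = ContinuousLinearMap.id ℝ _ - (γ / m) • ∑ k, fderiv ℝ (gradient (ℓ k)) z := by
    rw [fderiv_fun_sub differentiableAt_fun_id (hstep z), fderiv_fun_id,
      fderiv_fun_const_smul (DifferentiableAt.fun_sum fun k _ => hℓ k z),
      fderiv_fun_sum fun k _ => hℓ k z]
  intro x y
  rw [norm_gradient_sub_gradient]
  refine norm_fderiv_comp_sub_le hg (differentiable_fun_id.fun_sub hstep) hS.le (by positivity)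
    (fun z => ?_) (fun a b => ?_) (fun a b => ?_) (fun a b => ?_) x y
  · simpa [gradient] using hgbdd z
  · rw [← norm_gradient_sub_gradient]
    exact hglip a b
  · rw [sub_sub_sub_comm, ← smul_sub, ← Finset.sum_sub_distrib]
    have havg := norm_smul_sum_le_of_forall_norm_le hm hγ.le fun k => hgradLip k a b
    exact (norm_sub_le_of_le le_rfl havg).trans_eq (by ring)
  · rw [hφ', hφ', sub_sub_sub_cancel_left, ← smul_sub, ← Finset.sum_sub_distrib,
      norm_sub_rev a]
    exact (norm_smul_sum_le_of_forall_norm_le hm hγ.le fun k => hHessLip k b a).trans_eq (by ring)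
end

section
/- Let (T, dist) be a metric space, let a : T → T, let c : T → ℝ, and let D ⊆ T be a set of 'desirable' points. Suppose: (i) c is bounded from below on T; and (ii) for every z ∈ T with z ∉ D there exist ε(z) > 0 and δ(z) < 0 such that c(a(z')) − c(z') ≤ δ(z) for all z' with dist(z', z) ≤ ε(z). Let (z_i)_{i≥0} be the sequence defined by z_{i+1} = a(z_i) from an arbitrary z_0 ∈ T, and assume c(z_{i+1}) < c(z_i) for all i (the algorithm never terminates). Then every accumulation point of the sequence (z_i) belongs to D. -/
/-- Polak's algorithm-model convergence theorem: if the stopping-criterion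
function `c` is bounded below and the algorithm map `a` uniformly decreases `c`
near every non-desirable point, then every accumulation point of the iterate
sequence is desirable. -/
theorem algorithm_model_convergence
    {T : Type*} [MetricSpace T]
    (a : T → T) (c : T → ℝ) (D : Set T)
    (hbdd : BddBelow (Set.range c))
    (hdec : ∀ z ∉ D, ∃ ε > (0 : ℝ), ∃ δ < (0 : ℝ),
      ∀ z', dist z' z ≤ ε → c (a z') - c z' ≤ δ)
    (z : ℕ → T) (hz : ∀ i, z (i + 1) = a (z i))
    (hmono : ∀ i, c (z (i + 1)) < c (z i)) :
    ∀ zs : T,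
      (∃ φ : ℕ → ℕ, StrictMono φ ∧
        Filter.Tendsto (fun n => z (φ n)) Filter.atTop (nhds zs)) →
      zs ∈ D := by
  rintro zs ⟨φ, hφ, hlim⟩
  by_contra hzs
  obtain ⟨ε, hε, δ, hδ, hdecr⟩ := hdec zs hzs
  have hanti : Antitone fun i => c (z i) := antitone_nat_of_succ_le fun i => (hmono i).le
  have hconv := tendsto_atTop_ciInf hanti (hbdd.mono (Set.range_comp_subset_range z c))
  have hdiff : Filter.Tendsto (fun i => c (z (i + 1)) - c (z i)) Filter.atTop (nhds 0) := by
    simpa using (hconv.comp (Filter.tendsto_add_atTop_nat 1)).sub hconv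
  refine hδ.not_ge (le_of_tendsto (hdiff.comp hφ.tendsto_atTop) ?_)
  filter_upwards [hlim.eventually (Metric.closedBall_mem_nhds zs hε)] with n hn
  simpa only [Function.comp_apply, hz] using hdecr (z (φ n)) hn
end
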